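/- For every t > 0 and every ρ > 0, one has μ^{ℓ,r}_t([ρ, ∞)) ≤ (E[R^γ]/(γ(γ−1)))·t·ρ^{−γ}. -/

import Mathlib

open MeasureTheory Filter Set
open scoped ENNReal NNReal Topology

noncomputable section

/-- `ℓ_t(s,u)`: the length of the interval `[s,s+u] ∩ [0,t]`. -/
def ellK (t s u : ℝ) : ℝ := max 0 (min (s + u) t - max s 0)

/-- The intensity measure `u^{-γ-1} du` on `(0,∞)`. -/
def muU (γ : ℝ) : Measure ℝ :=
  (volume.restrict (Set.Ioi 0)).withDensity fun u => ENNReal.ofReal (u ^ (-γ - 1))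

/-- The measure `μ^ℓ_t` on `(0,∞)`:
`μ^ℓ_t(A) = ∫_ℝ ∫_0^∞ 1{ℓ_t(s,u) ∈ A} u^{-γ-1} du ds`. -/
def muEll (γ t : ℝ) : Measure ℝ :=
  (Measure.map (fun p : ℝ × ℝ => ellK t p.1 p.2)
    ((volume : Measure ℝ).prod (muU γ))).restrict (Set.Ioi 0)

/-- The measure `μ^{ℓ,r}_t` on `(0,∞)`:
`μ^{ℓ,r}_t(A) = ∫_{(0,∞)} ∫_{(0,∞)} 1{rℓ ∈ A} μ^ℓ_t(dℓ) F_R(dr)`. -/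
def muEllR (γ t : ℝ) (FR : Measure ℝ) : Measure ℝ :=
  (Measure.map (fun p : ℝ × ℝ => p.1 * p.2) (FR.prod (muEll γ t))).restrict (Set.Ioi 0)

/-- The measure `ν` on `[0,1]`: density `s^{-(γ+1)} + ((2-γ)/γ)·s^{-γ}` on `(0,1)` with
respect to Lebesgue measure, together with an atom of mass `1/(γ(γ-1))` at the point `1`. -/
def nuM (γ : ℝ) : Measure ℝ :=
  (volume.restrict (Set.Ioo 0 1)).withDensity
      (fun s => ENNReal.ofReal (s ^ (-(γ + 1)) + (2 - γ) / γ * s ^ (-γ)))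
    + (Real.toNNReal (1 / (γ * (γ - 1)))) • Measure.dirac 1

instance nuM.sigmaFinite (γ : ℝ) : SigmaFinite (nuM γ) := by
  unfold nuM; infer_instance

end

/-!
An interval `[s, s + u]` meets `[0, t]` in length at least `x > 0` exactly when `x ≤ t`, `x ≤ u` and
`x - u ≤ s ≤ t - x`. Hence, for `x ≤ t`,
`μ^ℓ_t([x, ∞)) = ∫_x^∞ (t - 2x + u) u^{-γ-1} du = x^{-γ} ((t - 2x) / γ + x / (γ - 1))`,
which falls short of `t x^{-γ} / (γ (γ - 1))` by `(2 - γ) (t - x) x^{-γ} / (γ (γ - 1)) ≥ 0`.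
Substituting `x = ρ / r` and integrating over `r` produces the factor `r^γ` of the moment.
-/

section PowerIntegral

variable {γ a x : ℝ}

lemma rpow_neg_sub_one_mul_add (hx : 0 < x) :
    x ^ (-γ - 1) * (a + x) = a * x ^ (-γ - 1) + x ^ (-γ) := by
  rw [Real.rpow_sub_one hx.ne']
  field_simp

lemma integrableOn_Ioi_rpow_mul_add (hγ : 1 < γ) (hx : 0 < x) :
    IntegrableOn (fun u : ℝ => u ^ (-γ - 1) * (a + u)) (Ioi x) := by
  refine IntegrableOn.congr_fun ?_ (fun u hu => (rpow_neg_sub_one_mul_add (hx.trans hu)).symm)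
    measurableSet_Ioi
  exact ((integrableOn_Ioi_rpow_of_lt (by linarith) hx).const_mul a).add
    (integrableOn_Ioi_rpow_of_lt (by linarith) hx)

lemma integral_Ioi_rpow_mul_add (hγ : 1 < γ) (hx : 0 < x) :
    ∫ u in Ioi x, u ^ (-γ - 1) * (a + u) = x ^ (-γ) * (a / γ + x / (γ - 1)) := by
  have hγ0 : γ ≠ 0 := by linarith
  have hγ1 : γ - 1 ≠ 0 := by linarith
  calc ∫ u in Ioi x, u ^ (-γ - 1) * (a + u)
      = ∫ u in Ioi x, (a * u ^ (-γ - 1) + u ^ (-γ)) :=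
        setIntegral_congr_fun measurableSet_Ioi fun u hu => rpow_neg_sub_one_mul_add (hx.trans hu)
    _ = a * (-x ^ (-γ - 1 + 1) / (-γ - 1 + 1)) + -x ^ (-γ + 1) / (-γ + 1) := by
        rw [integral_add ((integrableOn_Ioi_rpow_of_lt (by linarith) hx).const_mul a)
          (integrableOn_Ioi_rpow_of_lt (by linarith) hx), integral_const_mul,
          integral_Ioi_rpow_of_lt (by linarith) hx, integral_Ioi_rpow_of_lt (by linarith) hx]
    _ = x ^ (-γ) * (a / γ + x / (γ - 1)) := by
        rw [sub_add_cancel, Real.rpow_add_one hx.ne', show -γ + 1 = -(γ - 1) by ring]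
        field_simp

lemma lintegral_Ioi_rpow_mul_add (hγ : 1 < γ) (hx : 0 < x) (hax : 0 ≤ a + x) :
    ∫⁻ u in Ioi x, ENNReal.ofReal (u ^ (-γ - 1)) * ENNReal.ofReal (a + u)
      = ENNReal.ofReal (x ^ (-γ) * (a / γ + x / (γ - 1))) := by
  have hrpow {u : ℝ} (hu : u ∈ Ioi x) : 0 ≤ u ^ (-γ - 1) :=
    Real.rpow_nonneg (hx.trans hu).le _
  have hadd {u : ℝ} (hu : u ∈ Ioi x) : 0 ≤ a + u := by
    linarith [mem_Ioi.mp hu]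
  rw [← integral_Ioi_rpow_mul_add hγ hx,
    ofReal_integral_eq_lintegral_ofReal (integrableOn_Ioi_rpow_mul_add hγ hx)]
  · exact setLIntegral_congr_fun measurableSet_Ioi fun u hu =>
      (ENNReal.ofReal_mul (hrpow hu)).symm
  · filter_upwards [ae_restrict_mem measurableSet_Ioi] with u hu
    exact mul_nonneg (hrpow hu) (hadd hu)

end PowerIntegral

section OverlapLength

variable {t u x : ℝ}

lemma measurable_ellK (t : ℝ) : Measurable fun p : ℝ × ℝ => ellK t p.1 p.2 := by
  unfold ellK
  fun_prop

lemma le_ellK_iff {s : ℝ} (hx : 0 < x) :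
    x ≤ ellK t s u ↔ x ≤ t ∧ x ≤ u ∧ s ∈ Icc (x - u) (t - x) := by
  simp only [ellK, le_max_iff, hx.not_ge, false_or, le_sub_iff_add_le, le_min_iff, add_max,
    max_le_iff, mem_Icc]
  grind

lemma volume_setOf_le_ellK (hx : 0 < x) (hxt : x ≤ t) :
    volume {s | x ≤ ellK t s u}
      = (Ici x).indicator (fun u => ENNReal.ofReal (t - 2 * x + u)) u := by
  by_cases hu : x ≤ u
  · have : {s | x ≤ ellK t s u} = Icc (x - u) (t - x) := by
      ext s
      simp [le_ellK_iff hx, hxt, hu]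
    rw [this, Real.volume_Icc, indicator_of_mem (mem_Ici.mpr hu)]
    ring_nf
  · simp [le_ellK_iff hx, hu]

end OverlapLength

section OverlapMeasure

variable {γ t x : ℝ}

instance muU.sFinite (γ : ℝ) : SFinite (muU γ) := by
  unfold muU
  infer_instance

instance muEll.sFinite (γ t : ℝ) : SFinite (muEll γ t) := by
  unfold muEll
  infer_instance

lemma setLIntegral_Ici_muU (hx : 0 < x) (f : ℝ → ℝ≥0∞) :
    ∫⁻ u in Ici x, f u ∂(muU γ) = ∫⁻ u in Ioi x, ENNReal.ofReal (u ^ (-γ - 1)) * f u := by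
  rw [muU, setLIntegral_withDensity_eq_setLIntegral_mul_non_measurable _ (by fun_prop) _
    measurableSet_Ici (ae_of_all _ fun _ => ENNReal.ofReal_lt_top),
    Measure.restrict_restrict measurableSet_Ici,
    inter_eq_left.mpr (Ici_subset_Ioi.mpr hx), restrict_Ioi_eq_restrict_Ici]
  rfl

lemma muEll_Iic_zero (γ t : ℝ) : muEll γ t (Iic 0) = 0 := by
  rw [muEll, Measure.restrict_apply measurableSet_Iic, Iic_inter_Ioi, Ioc_self, measure_empty]

lemma muEll_Ici_eq_lintegral (hx : 0 < x) :
    muEll γ t (Ici x) = ∫⁻ u, volume {s | x ≤ ellK t s u} ∂(muU γ) := by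
  rw [muEll, Measure.restrict_eq_self _ (Ici_subset_Ioi.mpr hx),
    Measure.map_apply (measurable_ellK t) measurableSet_Ici,
    Measure.prod_apply_symm (measurable_ellK t measurableSet_Ici)]
  rfl

lemma muEll_Ici_of_lt (hx : 0 < x) (htx : t < x) : muEll γ t (Ici x) = 0 := by
  simp [muEll_Ici_eq_lintegral hx, le_ellK_iff hx, htx.not_ge]

lemma muEll_Ici_of_le (hγ : 1 < γ) (hx : 0 < x) (hxt : x ≤ t) :
    muEll γ t (Ici x) = ENNReal.ofReal (x ^ (-γ) * ((t - 2 * x) / γ + x / (γ - 1))) := by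
  simp only [muEll_Ici_eq_lintegral hx, volume_setOf_le_ellK hx hxt]
  rw [lintegral_indicator measurableSet_Ici, setLIntegral_Ici_muU hx,
    lintegral_Ioi_rpow_mul_add hγ hx (by linarith)]

lemma muEll_Ici_le (hγ1 : 1 < γ) (hγ2 : γ ≤ 2) (hx : 0 < x) :
    muEll γ t (Ici x) ≤ ENNReal.ofReal (t / (γ * (γ - 1)) * x ^ (-γ)) := by
  rcases lt_or_ge t x with htx | hxt
  · simp [muEll_Ici_of_lt hx htx]
  rw [muEll_Ici_of_le hγ1 hx hxt, mul_comm _ (x ^ (-γ))]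
  have hγ0 : 0 < γ := by linarith
  have hγ1' : 0 < γ - 1 := by linarith
  gcongr
  rw [div_add_div _ _ hγ0.ne' hγ1'.ne']
  gcongr
  nlinarith [mul_nonneg (sub_nonneg.mpr hγ2) (sub_nonneg.mpr hxt)]

end OverlapMeasure

lemma muEllR_Ici {γ t ρ : ℝ} (FR : Measure ℝ) [SFinite FR] (hρ : 0 < ρ) :
    muEllR γ t FR (Ici ρ) = ∫⁻ r in Ioi 0, muEll γ t (Ici (ρ / r)) ∂FR := by
  have hmul : Measurable fun p : ℝ × ℝ => p.1 * p.2 := by fun_prop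
  rw [muEllR, Measure.restrict_eq_self _ (Ici_subset_Ioi.mpr hρ),
    Measure.map_apply hmul measurableSet_Ici, Measure.prod_apply (hmul measurableSet_Ici),
    ← lintegral_indicator measurableSet_Ioi]
  refine lintegral_congr fun r => ?_
  rcases lt_or_ge 0 r with hr | hr
  · rw [indicator_of_mem (mem_Ioi.mpr hr)]
    congr 1 with l
    simp [div_le_iff₀' hr]
  · rw [indicator_of_notMem (notMem_Ioi.mpr hr)]
    refine measure_mono_null (fun l (hl : ρ ≤ r * l) => ?_) (muEll_Iic_zero γ t)
    exact (neg_of_mul_pos_right (hρ.trans_le hl) hr).le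

lemma ofReal_mul_integral_rpow {γ c : ℝ} {μ : Measure ℝ} (hμ : μ (Iic 0) = 0)
    (hint : Integrable (fun r => r ^ γ) μ) :
    ENNReal.ofReal (c * ∫ r, r ^ γ ∂μ)
      = ENNReal.ofReal c * ∫⁻ r in Ioi 0, ENNReal.ofReal (r ^ γ) ∂μ := by
  have hpos : ∀ᵐ r ∂μ, r ∈ Ioi (0 : ℝ) := by
    rwa [← compl_Ioi] at hμ
  have hnonneg : 0 ≤ᵐ[μ] fun r => r ^ γ := by
    filter_upwards [hpos] with r hr
    exact Real.rpow_nonneg (le_of_lt hr) γ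
  rw [Measure.restrict_eq_self_of_ae_mem hpos, ← ofReal_integral_eq_lintegral_ofReal hint hnonneg,
    ENNReal.ofReal_mul' (integral_nonneg_of_ae hnonneg)]

theorem stmt_9_general {γ ρ : ℝ} (hγ1 : 1 < γ) (hγ2 : γ ≤ 2) (FR : Measure ℝ) [SFinite FR]
    (t : ℝ) (hρ : 0 < ρ) :
    muEllR γ t FR (Ici ρ)
      ≤ ENNReal.ofReal (t / (γ * (γ - 1)) * ρ ^ (-γ))
        * ∫⁻ r in Ioi 0, ENNReal.ofReal (r ^ γ) ∂FR := by
  rw [muEllR_Ici FR hρ, ← lintegral_const_mul _ (by fun_prop)]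
  refine setLIntegral_mono' measurableSet_Ioi fun r (hr : 0 < r) => ?_
  have hscale : (ρ / r) ^ (-γ) = ρ ^ (-γ) * r ^ γ := by
    rw [Real.div_rpow hρ.le hr.le, Real.rpow_neg hr.le, div_inv_eq_mul]
  calc muEll γ t (Ici (ρ / r))
      ≤ ENNReal.ofReal (t / (γ * (γ - 1)) * (ρ / r) ^ (-γ)) :=
        muEll_Ici_le hγ1 hγ2 (div_pos hρ hr)
    _ = ENNReal.ofReal (t / (γ * (γ - 1)) * ρ ^ (-γ)) * ENNReal.ofReal (r ^ γ) := by
        rw [hscale, ← mul_assoc, ENNReal.ofReal_mul' (Real.rpow_nonneg hr.le γ)]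

/-- For every `t > 0` and `ρ > 0`: `μ^{ℓ,r}_t([ρ,∞)) ≤ (E[R^γ]/(γ(γ-1)))·t·ρ^{-γ}`. -/
theorem stmt_9 (γ : ℝ) (hγ1 : 1 < γ) (hγ2 : γ < 2)
    (FR : Measure ℝ) [IsProbabilityMeasure FR] (hFRpos : FR (Set.Iic 0) = 0)
    (hmom : Integrable (fun r => r ^ γ) FR)
    (t : ℝ) (ht : 0 < t) (ρ : ℝ) (hρ : 0 < ρ) :
    muEllR γ t FR (Set.Ici ρ)
      ≤ ENNReal.ofReal ((∫ r, r ^ γ ∂FR) / (γ * (γ - 1)) * t * ρ ^ (-γ)) := by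
  convert stmt_9_general hγ1 hγ2.le FR t hρ using 1
  rw [← ofReal_mul_integral_rpow hFRpos hmom]
  congr 1
  ring
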